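/- arXiv:2508.00392 — 3 statements merged into one kernel-verified Lean document; each statement's English description precedes it below -/
import Mathlib

section
/- Let Ω ⊆ ℝ^d be a convex set whose diameter is at most D (i.e., ‖x − y‖ ≤ D for all x, y ∈ Ω), with D > 0 and G > 0. Let f : ℝ^d → ℝ be differentiable on Ω with ‖∇f(w)‖ ≤ G for all w ∈ Ω, and suppose that for some α > 0 the function w ↦ exp(−α f(w)) is concave on Ω. Then, setting β = (1/2)·min{1/(4GD), α}, for all x, y ∈ Ω one has f(y) ≥ f(x) + ⟨∇f(x), y − x⟩ + (β/2)·⟨∇f(x), y − x⟩². -/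
open scoped RealInnerProductSpace

/-!
Exp-concavity passes to smaller parameters, because `t ↦ t ^ p` is concave and increasing for
`0 ≤ p ≤ 1`. So `exp (-γ f)` is concave for `0 < γ ≤ α`, hence lies below its tangents:
with `s` the derivative of `f` at `x` along `y - x`, `exp (-γ (f y - f x)) ≤ 1 - γ s`. If
`-1 ≤ γ s`, the right-hand side is at most `exp (-(γ s) - (γ s)² / 4)`, and taking logarithms
gives the bound. Since `|s| ≤ G D`, the condition holds as soon as `γ ≤ 1 / (G D)`.
-/

theorem hasDerivAt_one_add_mul_exp_sq_sub (t : ℝ) :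
    HasDerivAt (fun t : ℝ => (1 + t) * Real.exp (t ^ 2 / 4 - t))
      (Real.exp (t ^ 2 / 4 - t) * (t * (t - 1) / 2)) t := by
  have h_exponent : HasDerivAt (fun t : ℝ => t ^ 2 / 4 - t) (2 * t / 4 - 1) t := by
    simpa using ((hasDerivAt_pow 2 t).div_const 4).fun_sub (hasDerivAt_id' t)
  exact (((hasDerivAt_id' t).const_add 1).fun_mul h_exponent.exp).congr_deriv (by ring)

-- `t ↦ (1 + t) * exp (t ^ 2 / 4 - t)` increases up to `t = 0` and decreases on `[0, 1]`.
theorem one_add_le_exp_sub_sq {t : ℝ} (ht : t ≤ 1) : 1 + t ≤ Real.exp (t - t ^ 2 / 4) := by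
  have h_deriv := hasDerivAt_one_add_mul_exp_sq_sub
  have h_cont : Continuous fun t : ℝ => (1 + t) * Real.exp (t ^ 2 / 4 - t) := by fun_prop
  suffices h_le : (1 + t) * Real.exp (t ^ 2 / 4 - t) ≤ (1 + 0) * Real.exp (0 ^ 2 / 4 - 0) by
    rwa [add_zero, zero_pow two_ne_zero, zero_div, sub_zero, Real.exp_zero, one_mul,
      ← neg_sub, Real.exp_neg, mul_inv_le_iff₀ (Real.exp_pos _), one_mul] at h_le
  rcases le_total t 0 with h_neg | h_nonneg
  · refine monotoneOn_of_hasDerivWithinAt_nonneg (convex_Iic 0) h_cont.continuousOn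
      (fun u _ => (h_deriv u).hasDerivWithinAt) (fun u hu => ?_) h_neg Set.self_mem_Iic h_neg
    have hu : u < 0 := by simpa using hu
    exact mul_nonneg (Real.exp_pos _).le (by nlinarith)
  · refine antitoneOn_of_hasDerivWithinAt_nonpos (convex_Icc 0 1) h_cont.continuousOn
      (fun u _ => (h_deriv u).hasDerivWithinAt) (fun u hu => ?_)
      (Set.left_mem_Icc.2 zero_le_one) ⟨h_nonneg, ht⟩ h_nonneg
    have hu : 0 < u ∧ u < 1 := by simpa using hu
    exact mul_nonpos_of_nonneg_of_nonpos (Real.exp_pos _).le (by nlinarith)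

/-- `f` is `α`-exp-concave on `Ω`: the function `exp (-α f)` is concave there. This is the curvature
condition behind the quadratic lower bound. -/
def ExpConcaveOn {E : Type*} [AddCommGroup E] [Module ℝ E] (α : ℝ) (Ω : Set E) (f : E → ℝ) :
    Prop :=
  ConcaveOn ℝ Ω fun w => Real.exp (-α * f w)

section Module

variable {E : Type*} [AddCommGroup E] [Module ℝ E] {Ω : Set E} {f : E → ℝ} {x y : E}

theorem le_add_of_concaveOn_of_hasLineDerivWithinAt {f' : ℝ} (hf : ConcaveOn ℝ Ω f)
    (hx : x ∈ Ω) (hy : y ∈ Ω) (hf' : HasLineDerivWithinAt ℝ f f' Ω x (y - x)) :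
    f y ≤ f x + f' := by
  have h_line (t : ℝ) : x + t • (y - x) = AffineMap.lineMap x y t := by
    rw [AffineMap.lineMap_apply_module', add_comm]
  simp only [HasLineDerivWithinAt, h_line] at hf'
  have h_slope := (hf.comp_affineMap (AffineMap.lineMap x y)).slope_le_of_hasDerivWithinAt
    (by simpa using hx) (by simpa using hy) one_pos hf'
  simp only [slope_def_field, Function.comp_apply, AffineMap.lineMap_apply_one,
    AffineMap.lineMap_apply_zero, sub_zero, div_one] at h_slope
  linarith

namespace ExpConcaveOn

variable {α γ s : ℝ}

theorem of_le (hf : ExpConcaveOn α Ω f) (hγ : 0 < γ) (hγα : γ ≤ α) : ExpConcaveOn γ Ω f := by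
  have hα : 0 < α := hγ.trans_le hγα
  have h_rpow (w : E) : Real.exp (-γ * f w) = Real.exp (-α * f w) ^ (γ / α) := by
    rw [← Real.exp_mul]
    congr 1
    field_simp
  have h_nonneg : 0 ≤ γ / α := by positivity
  have h_concave := Real.concaveOn_rpow h_nonneg ((div_le_one hα).2 hγα)
  refine ⟨hf.1, fun u hu v hv a b ha hb hab => ?_⟩
  simp only [h_rpow]
  calc a • Real.exp (-α * f u) ^ (γ / α) + b • Real.exp (-α * f v) ^ (γ / α)
      ≤ (a • Real.exp (-α * f u) + b • Real.exp (-α * f v)) ^ (γ / α) :=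
        h_concave.2 (Real.exp_pos _).le (Real.exp_pos _).le ha hb hab
    _ ≤ Real.exp (-α * f (a • u + b • v)) ^ (γ / α) :=
        Real.rpow_le_rpow (by positivity) (hf.2 hu hv ha hb hab) h_nonneg

theorem exp_neg_mul_sub_le (hf : ExpConcaveOn α Ω f) (hx : x ∈ Ω) (hy : y ∈ Ω)
    (hs : HasLineDerivWithinAt ℝ f s Ω x (y - x)) :
    Real.exp (-α * (f y - f x)) ≤ 1 - α * s := by
  have h_deriv : HasLineDerivWithinAt ℝ (fun w => Real.exp (-α * f w))
      (Real.exp (-α * f x) * (-α * s)) Ω x (y - x) := by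
    simpa only [HasLineDerivWithinAt, zero_smul, add_zero] using!
      (HasDerivWithinAt.const_mul (-α) hs).exp
  have h_tangent := le_add_of_concaveOn_of_hasLineDerivWithinAt hf hx hy h_deriv
  rw [mul_sub, Real.exp_sub, div_le_iff₀ (Real.exp_pos _)]
  linarith

theorem add_sq_le (hf : ExpConcaveOn α Ω f) (hx : x ∈ Ω) (hy : y ∈ Ω)
    (hs : HasLineDerivWithinAt ℝ f s Ω x (y - x)) (hα : 0 < α) (hαs : -1 ≤ α * s) :
    f x + s + α / 4 * s ^ 2 ≤ f y := by
  have h_exp : Real.exp (-α * (f y - f x)) ≤ Real.exp (-(α * s) - (-(α * s)) ^ 2 / 4) :=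
    (hf.exp_neg_mul_sub_le hx hy hs).trans (one_add_le_exp_sub_sq (by linarith))
  have h_mul : α * (s + α / 4 * s ^ 2) ≤ α * (f y - f x) := by
    linarith [Real.exp_le_exp.1 h_exp]
  linarith [le_of_mul_le_mul_left h_mul hα]

end ExpConcaveOn

end Module

theorem exp_concave_quadratic_lower_bound_general {E : Type*} [NormedAddCommGroup E]
    [NormedSpace ℝ E] {Ω : Set E} {f : E → ℝ} {f' : E →L[ℝ] ℝ} {x y : E} {D G α γ : ℝ}
    (hf : ExpConcaveOn α Ω f) (hx : x ∈ Ω) (hy : y ∈ Ω) (hf' : HasFDerivWithinAt f f' Ω x)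
    (hG : ‖f'‖ ≤ G) (hD : ‖y - x‖ ≤ D) (hγ : 0 < γ) (hγ_le : γ ≤ min (1 / (G * D)) α) :
    f x + f' (y - x) + γ / 4 * f' (y - x) ^ 2 ≤ f y := by
  obtain ⟨hγGD, hγα⟩ := le_min_iff.1 hγ_le
  have hGD : 0 < G * D := one_div_pos.1 (hγ.trans_le hγGD)
  have h_abs : |γ * f' (y - x)| ≤ 1 :=
    calc |γ * f' (y - x)| = γ * |f' (y - x)| := by rw [abs_mul, abs_of_pos hγ]
      _ ≤ γ * (G * D) := by
        gcongr
        exact f'.le_of_opNorm_le_of_le hG hD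
      _ ≤ 1 := (le_div_iff₀ hGD).1 hγGD
  exact (hf.of_le hγ hγα).add_sq_le hx hy
    (hf'.hasLineDerivWithinAt _) hγ (neg_le_of_abs_le h_abs)

/-- Lemma 3 of Hazan et al.: an `α`-exp-concave function with gradients bounded by `G`
over a convex domain of diameter `D` satisfies a quadratic lower bound with
`β = (1/2) min {1/(4GD), α}`. -/
theorem exp_concave_quadratic_lower_bound
    {d : ℕ} (Ω : Set (EuclideanSpace ℝ (Fin d))) (hΩ : Convex ℝ Ω)
    (D G α : ℝ) (hD : 0 < D) (hG : 0 < G) (hα : 0 < α)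
    (hdiam : ∀ x ∈ Ω, ∀ y ∈ Ω, ‖x - y‖ ≤ D)
    (f : EuclideanSpace ℝ (Fin d) → ℝ)
    (g : EuclideanSpace ℝ (Fin d) → EuclideanSpace ℝ (Fin d))
    (hgrad : ∀ w ∈ Ω, HasGradientAt f (g w) w)
    (hgbound : ∀ w ∈ Ω, ‖g w‖ ≤ G)
    (hconc : ConcaveOn ℝ Ω (fun w => Real.exp (-α * f w))) :
    ∀ x ∈ Ω, ∀ y ∈ Ω,
      f y ≥ f x + ⟪g x, y - x⟫
        + (1 / 2 * min (1 / (4 * G * D)) α) / 2 * ⟪g x, y - x⟫ ^ 2 := by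
  intro x hx y hy
  have hγ_le : min (1 / (4 * G * D)) α ≤ min (1 / (G * D)) α := by
    gcongr
    linarith
  have h_bound := exp_concave_quadratic_lower_bound_general hconc hx hy
    (hgrad x hx).hasFDerivAt.hasFDerivWithinAt
    ((LinearIsometryEquiv.norm_map _ _).trans_le (hgbound x hx)) (hdiam y hy x hx)
    (lt_min (by positivity) hα) hγ_le
  rw [InnerProductSpace.toDual_apply_apply] at h_bound
  linarith
end

section
/- For every pair of natural numbers p, q with 1 ≤ p ≤ q, the integer interval [p, q] can be partitioned into a sequence of pairwise disjoint, consecutive geometric covering intervals I_{−m}, …, I_{−1}, I_0, I_1, …, I_n (each belonging to 𝓘, listed in order, whose union is exactly {p, p+1, …, q}) such that |I_{−i}| / |I_{−i+1}| ≤ 1/2 for all i ≥ 1, and |I_i| / |I_{i−1}| ≤ 1/2 for all i ≥ 2, where |I| denotes the number of integers in the interval I. -/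
/-- A geometric covering (GC) interval is an integer interval
`[i·2^k, (i+1)·2^k − 1]` with `k ≥ 0` and `i ≥ 1`. -/
def IsGCInterval (I : Finset ℕ) : Prop :=
  ∃ k i : ℕ, 1 ≤ i ∧ I = Finset.Icc (i * 2 ^ k) ((i + 1) * 2 ^ k - 1)

/-!
Choose `k` with `(q + 1) / 2 ^ k = p / 2 ^ k + 1`. The multiple `c = (q + 1) / 2 ^ k * 2 ^ k` of
`2 ^ k` then satisfies `p < c ≤ q + 1`, and both `c - p` and `q + 1 - c` are at most `2 ^ k`.
Walk outwards from `c` on either side; the steps are the powers of two in the binary expansions of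
these two distances, in decreasing order. All exponents are at most `k`, so every step `2 ^ e`
starts and ends at a multiple of `2 ^ e` and thus spans a GC interval. Since `c ≠ p` there is at
least one step to the left; the first one is `I_0`.
-/

open Finset

theorem isGCInterval_Ico_of_dvd {a k : ℕ} (ha : 0 < a) (hdvd : 2 ^ k ∣ a) :
    IsGCInterval (Ico a (a + 2 ^ k)) := by
  obtain ⟨i, rfl⟩ := hdvd
  refine ⟨k, i, Nat.pos_of_mul_pos_left ha, ?_⟩
  have hlast : (i + 1) * 2 ^ k = 2 ^ k * i + 2 ^ k := by ring
  have hpos : 0 < 2 ^ k := by positivity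
  ext x
  rw [mem_Ico, mem_Icc, hlast, mul_comm i]
  omega

theorem exists_div_two_pow_eq_add_one {a b : ℕ} (hab : a < b) :
    ∃ k, b / 2 ^ k = a / 2 ^ k + 1 := by
  induction b using Nat.strong_induction_on generalizing a with
  | _ b ih =>
    obtain rfl | hlt := (Nat.succ_le_of_lt hab).eq_or_lt
    · exact ⟨0, by simp⟩
    · obtain ⟨k, hk⟩ := ih (b / 2) (by omega) (a := a / 2) (by omega)
      exact ⟨k + 1, by simpa only [pow_succ', Nat.div_div_eq_div_mul] using hk⟩

theorem exists_two_pow_dvd_mem_Ioc {a b : ℕ} (hab : a < b) :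
    ∃ k, ∃ c ∈ Ioc a b, 2 ^ k ∣ c ∧ c - a ≤ 2 ^ k ∧ b - c ≤ 2 ^ k := by
  obtain ⟨k, hk⟩ := exists_div_two_pow_eq_add_one hab
  have hpos : 0 < 2 ^ k := by positivity
  have hc : 2 ^ k * (b / 2 ^ k) = 2 ^ k * (a / 2 ^ k) + 2 ^ k := by rw [hk, mul_add_one]
  have ha_ge := Nat.mul_div_le a (2 ^ k)
  have ha_lt := Nat.lt_mul_div_succ a hpos
  have hb_lt := Nat.lt_mul_div_succ b hpos
  rw [mul_add_one] at ha_lt hb_lt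
  refine ⟨k, 2 ^ k * (b / 2 ^ k), mem_Ioc.2 ⟨?_, Nat.mul_div_le b _⟩, dvd_mul_right _ _, ?_, ?_⟩
  all_goals omega

theorem pow_dvd_sum_range_pow {R : Type*} [Semiring R] (b : R) {e : ℕ → ℕ} {n i m : ℕ}
    (he : AntitoneOn e (Set.Iio n)) (hi : i < n) (hm : m ≤ i + 1) :
    b ^ e i ∣ ∑ j ∈ range m, b ^ e j := by
  refine dvd_sum fun j hj ↦ pow_dvd_pow b ?_
  have hji : j ≤ i := by rw [mem_range] at hj; omega
  exact he (hji.trans_lt hi) hi hji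

/-- `IsBinaryExpansion d n e` says that `d = 2 ^ e 0 + ⋯ + 2 ^ e (n - 1)` is the binary expansion of
`d`, leading digit first. The values of `e` from `n` on are irrelevant. -/
structure IsBinaryExpansion (d n : ℕ) (e : ℕ → ℕ) : Prop where
  strictAntiOn : StrictAntiOn e (Set.Iio n)
  sum_eq : ∑ i ∈ range n, 2 ^ e i = d

theorem exists_isBinaryExpansion (d : ℕ) : ∃ n e, IsBinaryExpansion d n e := by
  obtain ⟨L, hsorted, hsum⟩ : ∃ L : List ℕ, L.SortedGT ∧ (L.map (2 ^ ·)).sum = d :=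
    ⟨d.bitIndices.reverse, List.sortedGT_reverse.2 Nat.bitIndices_sorted, by
      rw [List.map_reverse, List.sum_reverse, Nat.sum_map_two_pow_bitIndices]⟩
  refine ⟨L.length, (L.getD · 0), fun i hi j hj hij ↦ ?_, ?_⟩
  · rw [Set.mem_Iio] at hi hj
    simpa only [List.getD_eq_getElem _ _ hi, List.getD_eq_getElem _ _ hj] using
      hsorted.getElem_gt_getElem_of_lt hij
  · calc
      ∑ i ∈ range L.length, 2 ^ L.getD i 0 = ∑ i : Fin L.length, 2 ^ L[i.1] := by
        simp only [sum_range, Fin.is_lt, List.getD_eq_getElem]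
      _ = (L.map (2 ^ ·)).sum := Fin.sum_univ_fun_getElem L (2 ^ ·)
      _ = d := hsum

namespace IsBinaryExpansion

variable {d n i : ℕ} {e : ℕ → ℕ}

theorem sum_range_le (h : IsBinaryExpansion d n e) (hi : i ≤ n) :
    ∑ j ∈ range i, 2 ^ e j ≤ d :=
  h.sum_eq ▸ sum_le_sum_of_subset (range_subset_range.2 hi)

theorem two_pow_le (h : IsBinaryExpansion d n e) (hi : i < n) : 2 ^ e i ≤ d :=
  h.sum_eq ▸ single_le_sum_of_canonicallyOrdered (f := fun j ↦ 2 ^ e j) (mem_range.2 hi)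

theorem two_mul_two_pow_succ_le (h : IsBinaryExpansion d n e) (hi : i + 1 < n) :
    2 * 2 ^ e (i + 1) ≤ 2 ^ e i := by
  rw [← pow_succ']
  exact Nat.pow_le_pow_right two_pos
    (h.strictAntiOn (Set.mem_Iio.2 (by omega)) hi (Nat.lt_succ_self i))

theorem two_pow_dvd_sum_range {m : ℕ} (h : IsBinaryExpansion d n e) (hi : i < n)
    (hm : m ≤ i + 1) : 2 ^ e i ∣ ∑ j ∈ range m, 2 ^ e j :=
  pow_dvd_sum_range_pow 2 h.strictAntiOn.antitoneOn hi hm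

theorem two_pow_dvd_of_le {c k : ℕ} (h : IsBinaryExpansion d n e) (hd : d ≤ 2 ^ k)
    (hdvd : 2 ^ k ∣ c) (hi : i < n) : 2 ^ e i ∣ c :=
  have hle : e i ≤ k := (Nat.pow_le_pow_iff_right one_lt_two).1 ((h.two_pow_le hi).trans hd)
  (pow_dvd_pow 2 hle).trans hdvd

end IsBinaryExpansion

theorem lt_of_mem_Ico_map_add_one {β : Type*} [Preorder β] [LocallyFiniteOrder β] {f : ℤ → β}
    (hf : Monotone f) {i j : ℤ} (hij : i < j) {a b : β} (ha : a ∈ Ico (f i) (f (i + 1)))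
    (hb : b ∈ Ico (f j) (f (j + 1))) : a < b :=
  calc
    a < f (i + 1) := (mem_Ico.1 ha).2
    _ ≤ f j := hf hij
    _ ≤ b := (mem_Ico.1 hb).1

theorem biUnion_Icc_Ico_map_add_one {β : Type*} [LinearOrder β] [LocallyFiniteOrder β]
    {f : ℤ → β} (hf : Monotone f) {m n : ℤ} (hmn : m ≤ n) :
    (Icc m n).biUnion (fun j ↦ Ico (f j) (f (j + 1))) = Ico (f m) (f (n + 1)) := by
  induction n, hmn using Int.leInduction with
  | base => simp
  | succ n hmn ih =>
    rw [← insert_Icc_right_eq_Icc_add_one (by omega), biUnion_insert, ih, union_comm,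
      Ico_union_Ico_eq_Ico (hf (by omega)) (hf (by omega))]

/-- The end points of consecutive intervals laid out around `c : ℕ`: going left from `c` they have
lengths `l 0, l 1, …`, going right `r 0, r 1, …`. The point `c` itself has index `1`, so that the
interval between the end points `j` and `j + 1` is the paper's `I_j`. The subtraction is truncated,
which keeps the sequence monotone even where the intervals on the left run out of room. -/
def breakpoint (c : ℕ) (l r : ℕ → ℕ) (j : ℤ) : ℕ :=
  c + ∑ i ∈ range (j - 1).toNat, r i - ∑ i ∈ range (1 - j).toNat, l i

/-- The interval between the consecutive end points `breakpoint c l r j` and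
`breakpoint c l r (j + 1)`. -/
def block (c : ℕ) (l r : ℕ → ℕ) (j : ℤ) : Finset ℕ :=
  Ico (breakpoint c l r j) (breakpoint c l r (j + 1))

section Block

variable (c : ℕ) (l r : ℕ → ℕ)

theorem monotone_breakpoint : Monotone (breakpoint c l r) := by
  intro i j hij
  unfold breakpoint
  gcongr <;> omega

theorem breakpoint_one_sub_natCast (i : ℕ) : breakpoint c l r (1 - i) = c - ∑ j ∈ range i, l j := by
  simp [breakpoint]

theorem breakpoint_neg_natCast (i : ℕ) : breakpoint c l r (-i) = c - ∑ j ∈ range (i + 1), l j := by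
  rw [← breakpoint_one_sub_natCast c l r]
  congr 1
  omega

theorem breakpoint_natCast_add_one (i : ℕ) : breakpoint c l r (i + 1) = c + ∑ j ∈ range i, r j := by
  simp [breakpoint]

variable {c l} in
theorem block_neg_natCast {i : ℕ} (h : ∑ j ∈ range (i + 1), l j ≤ c) :
    block c l r (-i) =
      Ico (c - ∑ j ∈ range (i + 1), l j) (c - ∑ j ∈ range (i + 1), l j + l i) := by
  rw [block, neg_add_eq_sub, breakpoint_neg_natCast, breakpoint_one_sub_natCast]
  rw [sum_range_succ] at h ⊢
  congr 1
  omega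

theorem block_natCast_add_one (i : ℕ) :
    block c l r (i + 1) =
      Ico (c + ∑ j ∈ range i, r j) (c + ∑ j ∈ range i, r j + r i) := by
  have h := breakpoint_natCast_add_one c l r (i + 1)
  push_cast at h
  rw [block, breakpoint_natCast_add_one, h, sum_range_succ, add_assoc]

end Block

section DyadicBlock

variable {c k d n i : ℕ} {e : ℕ → ℕ}

theorem isGCInterval_block_neg_natCast (r : ℕ → ℕ) (he : IsBinaryExpansion d n e) (hdc : d < c)
    (hd : d ≤ 2 ^ k) (hc : 2 ^ k ∣ c) (hi : i < n) :
    IsGCInterval (block c (2 ^ e ·) r (-i)) := by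
  have hsum := (he.sum_range_le hi).trans_lt hdc
  rw [block_neg_natCast r hsum.le]
  exact isGCInterval_Ico_of_dvd (Nat.sub_pos_of_lt hsum)
    (Nat.dvd_sub (he.two_pow_dvd_of_le hd hc hi) (he.two_pow_dvd_sum_range hi le_rfl))

theorem isGCInterval_block_natCast_add_one (l : ℕ → ℕ) (he : IsBinaryExpansion d n e)
    (hc_pos : 0 < c) (hd : d ≤ 2 ^ k) (hc : 2 ^ k ∣ c) (hi : i < n) :
    IsGCInterval (block c l (2 ^ e ·) (i + 1)) := by
  rw [block_natCast_add_one]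
  exact isGCInterval_Ico_of_dvd (by positivity)
    (dvd_add (he.two_pow_dvd_of_le hd hc hi) (he.two_pow_dvd_sum_range hi i.le_succ))

theorem two_mul_card_block_neg_natCast_succ_le (r : ℕ → ℕ) (he : IsBinaryExpansion d n e)
    (hdc : d ≤ c) (hi : i + 1 < n) :
    2 * #(block c (2 ^ e ·) r (-(i + 1 : ℕ))) ≤ #(block c (2 ^ e ·) r (-i)) := by
  rw [block_neg_natCast r ((he.sum_range_le hi).trans hdc),
    block_neg_natCast r ((he.sum_range_le (by omega)).trans hdc)]
  simpa only [Nat.card_Ico, Nat.add_sub_cancel_left] using he.two_mul_two_pow_succ_le hi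

theorem two_mul_card_block_natCast_add_two_le (c : ℕ) (l : ℕ → ℕ) (he : IsBinaryExpansion d n e)
    (hi : i + 1 < n) :
    2 * #(block c l (2 ^ e ·) ((i + 1 : ℕ) + 1)) ≤ #(block c l (2 ^ e ·) (i + 1)) := by
  rw [block_natCast_add_one, block_natCast_add_one]
  simpa only [Nat.card_Ico, Nat.add_sub_cancel_left] using he.two_mul_two_pow_succ_le hi

end DyadicBlock

/-- Lemma 1.2 of Daniely et al.: any interval `[p, q]` with `1 ≤ p ≤ q` can be partitioned
into pairwise disjoint consecutive GC intervals `I_{-m}, …, I_0, I_1, …, I_n` (listed in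
increasing order, with union exactly `[p,q]`) such that `|I_{-i}| / |I_{-i+1}| ≤ 1/2` for
all `i ≥ 1` and `|I_i| / |I_{i-1}| ≤ 1/2` for all `i ≥ 2`. -/
theorem gc_intervals_partition (p q : ℕ) (hp : 1 ≤ p) (hpq : p ≤ q) :
    ∃ (m n : ℕ) (I : ℤ → Finset ℕ),
      (∀ j : ℤ, -(m : ℤ) ≤ j → j ≤ n → IsGCInterval (I j)) ∧
      (∀ j₁ j₂ : ℤ, -(m : ℤ) ≤ j₁ → j₁ < j₂ → j₂ ≤ n →
        ∀ a ∈ I j₁, ∀ b ∈ I j₂, a < b) ∧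
      ((Finset.Icc (-(m : ℤ)) (n : ℤ)).biUnion I = Finset.Icc p q) ∧
      (∀ i : ℕ, 1 ≤ i → (i : ℤ) ≤ m →
        2 * (I (-(i : ℤ))).card ≤ (I (-(i : ℤ) + 1)).card) ∧
      (∀ i : ℕ, 2 ≤ i → (i : ℤ) ≤ n →
        2 * (I (i : ℤ)).card ≤ (I ((i : ℤ) - 1)).card) := by
  obtain ⟨k, c, hmem, hdvd, hleft, hright⟩ := exists_two_pow_dvd_mem_Ioc (Nat.lt_add_one_of_le hpq)
  obtain ⟨hpc, hcq⟩ := mem_Ioc.1 hmem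
  obtain ⟨m, l, hl⟩ := exists_isBinaryExpansion (c - p)
  obtain ⟨n, r, hr⟩ := exists_isBinaryExpansion (q + 1 - c)
  obtain ⟨m, rfl⟩ : ∃ m', m = m' + 1 := Nat.exists_eq_succ_of_ne_zero <| by
    rintro rfl
    exact (Nat.sub_pos_of_lt hpc).ne hl.sum_eq
  have hmono := monotone_breakpoint c (2 ^ l ·) (2 ^ r ·)
  refine ⟨m, n, block c (2 ^ l ·) (2 ^ r ·), fun j hmj hjn ↦ ?_,
    fun _ _ _ hij _ a ha b hb ↦ lt_of_mem_Ico_map_add_one hmono hij ha hb, ?_,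
    fun i hi him ↦ ?_, fun i hi hin ↦ ?_⟩
  · obtain ⟨i, rfl | rfl⟩ : ∃ i : ℕ, j = -i ∨ j = i + 1 := ⟨max (-j).toNat (j - 1).toNat, by omega⟩
    · exact isGCInterval_block_neg_natCast _ hl (by omega) hleft hdvd (by omega)
    · exact isGCInterval_block_natCast_add_one _ hr (by omega) hright hdvd (by omega)
  · refine (biUnion_Icc_Ico_map_add_one hmono (by omega)).trans ?_
    rw [breakpoint_neg_natCast, breakpoint_natCast_add_one, hl.sum_eq, hr.sum_eq,
      Nat.sub_sub_self hpc.le, Nat.add_sub_cancel' hcq, Ico_add_one_right_eq_Icc]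
  · obtain ⟨i, rfl⟩ := Nat.exists_eq_add_of_le' hi
    simpa using two_mul_card_block_neg_natCast_succ_le (2 ^ r ·) hl (Nat.sub_le c p) (by omega)
  · obtain ⟨i, rfl⟩ := Nat.exists_eq_add_of_le' hi
    simpa [add_sub_assoc, add_assoc] using
      two_mul_card_block_natCast_add_two_le (i := i) c (2 ^ l ·) hr (by omega)
end

section
/- Let a_0 > 0 and a_1, …, a_m ∈ [0, 1] be real numbers, and let f : (0, +∞) → [0, +∞) be a non-increasing function. Then Σ_{i=1}^{m} a_i · f(a_0 + a_1 + ⋯ + a_{i−1}) ≤ f(a_0) + ∫_{a_0}^{a_0 + a_1 + ⋯ + a_m} f(u) du. -/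
open Finset

/-!
Put `sᵢ = a₀ + ⋯ + aᵢ`. On an interval `[x, y]` of length at most `c`, replacing the right Riemann
rectangle `(y - x) f(y)`, which lies below the integral of `f`, by the left rectangle `(y - x) f(x)`
costs `(y - x) (f(x) - f(y)) ≤ c (f(x) - f(y))`. Summed over the intervals `[sᵢ, sᵢ₊₁]`, these costs
telescope to `c (f(s₀) - f(sₘ))`.
-/

section Interval

variable {f : ℝ → ℝ} {x y : ℝ}

theorem sub_mul_right_le_integral_of_antitoneOn (hxy : x ≤ y)
    (hf : AntitoneOn f (Set.Icc x y)) : (y - x) * f y ≤ ∫ u in x..y, f u := by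
  have hf_int : IntervalIntegrable f MeasureTheory.volume x y :=
    AntitoneOn.intervalIntegrable (by rwa [Set.uIcc_of_le hxy])
  calc (y - x) * f y = ∫ _ in x..y, f y := by simp
    _ ≤ ∫ u in x..y, f u :=
      intervalIntegral.integral_mono_on hxy intervalIntegrable_const hf_int
        fun u hu ↦ hf hu (Set.right_mem_Icc.2 hxy) hu.2

theorem sub_mul_left_le_mul_sub_add_integral_of_antitoneOn {c : ℝ} (hxy : x ≤ y)
    (hc : y - x ≤ c) (hf : AntitoneOn f (Set.Icc x y)) :
    (y - x) * f x ≤ c * (f x - f y) + ∫ u in x..y, f u := by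
  have hf_le : f y ≤ f x := hf (Set.left_mem_Icc.2 hxy) (Set.right_mem_Icc.2 hxy) hxy
  calc (y - x) * f x = (y - x) * (f x - f y) + (y - x) * f y := by ring
    _ ≤ c * (f x - f y) + ∫ u in x..y, f u :=
      add_le_add (mul_le_mul_of_nonneg_right hc (sub_nonneg.2 hf_le))
        (sub_mul_right_le_integral_of_antitoneOn hxy hf)

end Interval

theorem sum_sub_mul_left_le_mul_sub_add_integral_of_antitoneOn {f : ℝ → ℝ} {s : ℕ → ℝ} {n : ℕ}
    {c : ℝ} (hs : MonotoneOn s (Set.Iic n)) (hc : ∀ i < n, s (i + 1) - s i ≤ c)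
    (hf : AntitoneOn f (Set.Icc (s 0) (s n))) :
    ∑ i ∈ range n, (s (i + 1) - s i) * f (s i)
      ≤ c * (f (s 0) - f (s n)) + ∫ u in (s 0)..(s n), f u := by
  have hs_step : ∀ i < n, s i ≤ s (i + 1) := fun i hi ↦ hs hi.le hi i.le_succ
  have hf_step : ∀ i < n, AntitoneOn f (Set.Icc (s i) (s (i + 1))) := fun i hi ↦
    hf.mono (Set.Icc_subset_Icc (hs n.zero_le hi.le i.zero_le) (hs hi Set.self_mem_Iic hi))
  have hf_int : ∀ i < n, IntervalIntegrable f MeasureTheory.volume (s i) (s (i + 1)) :=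
    fun i hi ↦ AntitoneOn.intervalIntegrable
      (by simpa only [Set.uIcc_of_le (hs_step i hi)] using hf_step i hi)
  calc ∑ i ∈ range n, (s (i + 1) - s i) * f (s i)
      ≤ ∑ i ∈ range n, (c * (f (s i) - f (s (i + 1))) + ∫ u in (s i)..(s (i + 1)), f u) :=
        sum_le_sum fun i hi ↦
          have hi : i < n := mem_range.1 hi
          sub_mul_left_le_mul_sub_add_integral_of_antitoneOn (hs_step i hi) (hc i hi) (hf_step i hi)
    _ = c * (f (s 0) - f (s n)) + ∫ u in (s 0)..(s n), f u := by
        rw [sum_add_distrib, ← mul_sum, sum_range_sub' (fun i ↦ f (s i)),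
          intervalIntegral.sum_integral_adjacent_intervals hf_int]

theorem monotoneOn_sum_range_succ {M : Type*} [AddCommMonoid M] [PartialOrder M]
    [IsOrderedAddMonoid M] {a : ℕ → M} {m : ℕ} (ha : ∀ i, 1 ≤ i → i ≤ m → 0 ≤ a i) :
    MonotoneOn (fun n ↦ ∑ j ∈ range (n + 1), a j) (Set.Iic m) := by
  intro k _ n hn hkn
  refine sum_le_sum_of_subset_of_nonneg (range_mono (Nat.succ_le_succ hkn)) fun i hi hik ↦ ?_
  simp only [mem_range, Set.mem_Iic] at hi hik hn
  exact ha i (by lia) (by lia)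

theorem sum_le_f_add_integral_general {m : ℕ} {a : ℕ → ℝ} {c : ℝ}
    (ha : ∀ i, 1 ≤ i → i ≤ m → a i ∈ Set.Icc 0 c) {f : ℝ → ℝ}
    (hf : AntitoneOn f (Set.Icc (a 0) (∑ j ∈ range (m + 1), a j))) :
    ∑ i ∈ Icc 1 m, a i * f (∑ j ∈ range i, a j)
      ≤ c * (f (a 0) - f (∑ j ∈ range (m + 1), a j))
        + ∫ u in (a 0)..(∑ j ∈ range (m + 1), a j), f u := by
  let s : ℕ → ℝ := fun n ↦ ∑ j ∈ range (n + 1), a j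
  have hs_zero : s 0 = a 0 := sum_range_one a
  have hs_sub : ∀ i, s (i + 1) - s i = a (i + 1) := fun i ↦ sum_range_succ_sub_sum a
  have hs_mono : MonotoneOn s (Set.Iic m) :=
    monotoneOn_sum_range_succ fun i hi him ↦ (ha i hi him).1
  have hs_le : ∀ i < m, s (i + 1) - s i ≤ c := fun i hi ↦
    (hs_sub i).trans_le (ha (i + 1) i.succ_pos hi).2
  have hsum : ∑ i ∈ Icc 1 m, a i * f (∑ j ∈ range i, a j)
      = ∑ i ∈ range m, (s (i + 1) - s i) * f (s i) := by
    simp only [hs_sub]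
    rw [range_eq_Ico, sum_Ico_add' (fun i ↦ a i * f (∑ j ∈ range i, a j)) 0 m 1, zero_add,
      Ico_add_one_right_eq_Icc]
  rw [hsum, ← hs_zero]
  exact sum_sub_mul_left_le_mul_sub_add_integral_of_antitoneOn hs_mono hs_le (hs_zero ▸ hf)

/-- Lemma 14 of Gaillard et al.: for `a_0 > 0`, `a_1, …, a_m ∈ [0,1]` and a non-increasing
nonnegative function `f` on `(0, ∞)`,
`Σ_{i=1}^m a_i · f(a_0 + ⋯ + a_{i−1}) ≤ f(a_0) + ∫_{a_0}^{a_0 + ⋯ + a_m} f(u) du`. -/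
theorem sum_le_f_add_integral (m : ℕ) (a : ℕ → ℝ) (ha0 : 0 < a 0)
    (ha : ∀ i, 1 ≤ i → i ≤ m → a i ∈ Set.Icc (0 : ℝ) 1)
    (f : ℝ → ℝ) (hf_nonneg : ∀ x, 0 < x → 0 ≤ f x)
    (hf_anti : AntitoneOn f (Set.Ioi 0)) :
    ∑ i ∈ Icc 1 m, a i * f (∑ j ∈ range i, a j)
      ≤ f (a 0) + ∫ u in (a 0)..(∑ j ∈ range (m + 1), a j), f u := by
  have hsum_pos : 0 < ∑ j ∈ range (m + 1), a j := by
    rw [sum_range_succ']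
    exact add_pos_of_nonneg_of_pos
      (sum_nonneg fun i hi ↦ (ha (i + 1) i.succ_pos (mem_range.1 hi)).1) ha0
  linarith [sum_le_f_add_integral_general ha (hf_anti.mono fun _ hu ↦ ha0.trans_le hu.1),
    hf_nonneg _ hsum_pos]
end
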